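/- Let G be a 2-connected finite simple graph, Z a cycle in G, λ : E(G) → ℤ/2 an edge labeling, and B a bridge of G with respect to Z such that every proper path in B with both endpoints in V(B) ∩ V(Z) is nontrivial. Then |V(B) ∩ V(Z)| = 2; moreover, writing V(B) ∩ V(Z) = {x, y}, there exists a nontrivial proper walk in B from x to y, and every proper closed walk in B based at x or at y is trivial (that is, B induces the single arrow between x and y and no loop). -/

import Mathlib

open SimpleGraph

variable {V : Type*}

/-- The `λ`-value of a walk: the sum in `ℤ/2`, over the edges of the walk counted with
multiplicity, of their labels. -/
def walkLambda (lam : Sym2 V → ZMod 2) {G : SimpleGraph V} {x y : V} (w : G.Walk x y) :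
    ZMod 2 :=
  (w.edges.map lam).sum

/-- `b` can be reached from `a` by a walk in `G` all of whose vertices avoid `Zv`. -/
def ReachAvoiding (G : SimpleGraph V) (Zv : Set V) (a b : V) : Prop :=
  ∃ w : G.Walk a b, ∀ x ∈ w.support, x ∉ Zv

/-- `B` is a bridge of `G` with respect to a cycle with vertex set `Zv` and edge set `Ze`:
either a single edge not of the cycle together with its two endpoints, both on the cycle,
or a connected component of `G − Zv` together with all edges (and their endpoints on the
cycle) joining it to `Zv`. -/
def IsBridgeOf (G : SimpleGraph V) (Zv : Set V) (Ze : Set (Sym2 V)) (B : G.Subgraph) :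
    Prop :=
  (∃ u v, G.Adj u v ∧ s(u, v) ∉ Ze ∧ u ∈ Zv ∧ v ∈ Zv ∧
      B.verts = {u, v} ∧ ∀ a b, B.Adj a b ↔ s(a, b) = s(u, v)) ∨
  (∃ a, a ∉ Zv ∧
      B.verts = {b | ReachAvoiding G Zv a b} ∪
        {z | z ∈ Zv ∧ ∃ c, ReachAvoiding G Zv a c ∧ G.Adj c z} ∧
      ∀ x y, B.Adj x y ↔
        G.Adj x y ∧ (ReachAvoiding G Zv a x ∨ ReachAvoiding G Zv a y))

/-- `w` is a proper walk lying in the subgraph `B`, with respect to a cycle with vertex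
set `Zv` and edge set `Ze`: the walk lies in `B`, none of its vertices lies on the cycle
except possibly its endpoints, and none of its edges is an edge of the cycle. -/
def IsProperWalkIn {G : SimpleGraph V} (B : G.Subgraph) (Zv : Set V) (Ze : Set (Sym2 V))
    {x y : V} (w : G.Walk x y) : Prop :=
  (∀ u ∈ w.support, u ∈ B.verts) ∧ (∀ e ∈ w.edges, e ∈ B.edgeSet) ∧
    (∀ u ∈ w.support, u ∈ Zv → u = x ∨ u = y) ∧ (∀ e ∈ w.edges, e ∉ Ze)

/-- The set of `λ`-values of proper walks in `B` from `x` to the reference vertex `w`. -/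
def labelSet {G : SimpleGraph V} (B : G.Subgraph) (Zv : Set V) (Ze : Set (Sym2 V))
    (lam : Sym2 V → ZMod 2) (x w : V) : Set (ZMod 2) :=
  {t | ∃ ω : G.Walk x w, IsProperWalkIn B Zv Ze ω ∧ walkLambda lam ω = t}

/-- A graph is 2-connected: it has at least three vertices, it is connected, and it
remains connected after the deletion of any single vertex. -/
def TwoConnected (G : SimpleGraph V) : Prop :=
  3 ≤ Nat.card V ∧ G.Connected ∧ ∀ v : V, (G.induce {u | u ≠ v}).Connected

/-!
Write `A` for the set of vertices of `B` on `Z` and call the others inner. A single edge is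
immediate, so let `B` consist of a component of `G - Z` and the edges leaving it.

Deleting one vertex of `G` separates no inner vertex of `B` from the rest of `A`, so `|A| ≥ 2`.
Three vertices of `A` would be the ends of a tripod with inner legs; each leg lies on two of the
three paths between the ends, so the labels of these paths sum to `0`, while they should sum to
`1 + 1 + 1`.

Hence `A = {x, y}`, and any two paths of `B` from `x` to `y` have the same label `1`. By the case of
Menger's theorem for two paths, each cycle `C` of `B` is joined to `x` and `y` by disjoint paths;
the two arcs of `C` complete these to two paths from `x` to `y`, so the arcs have equal labels and
`C` is trivial. A closed walk reduces to a trivial one by removing cycles and backtracking edges.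
-/

section Walks

variable {H : SimpleGraph V} {a b c : V}

lemma isPath_append {p : H.Walk a b} {q : H.Walk b c} (hp : p.IsPath) (hq : q.IsPath)
    (hpq : ∀ t ∈ p.support, t ∈ q.support → t = b) : (p.append q).IsPath := by
  have hq_nodup := hq.support_nodup
  rw [← Walk.cons_tail_support, List.nodup_cons] at hq_nodup
  rw [Walk.isPath_def, Walk.support_append, List.nodup_append']
  refine ⟨hp.support_nodup, hq_nodup.2, fun t htp htq => hq_nodup.1 ?_⟩
  exact hpq t htp (List.mem_of_mem_tail htq) ▸ htq

lemma eq_of_mem_support_of_isPath_append {p : H.Walk a b} {q : H.Walk b c}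
    (hpq : (p.append q).IsPath) {t : V} (htp : t ∈ p.support) (htq : t ∈ q.support) : t = b := by
  by_contra htb
  exact hpq.ne_of_mem_support_of_append htb htp htq rfl

lemma exists_path_to_first_mem {S : Set V} (w : H.Walk a b) (hb : b ∈ S) :
    ∃ m ∈ S, ∃ r : H.Walk a m, r.IsPath ∧ r.support ⊆ w.support ∧
      ∀ t ∈ r.support, t ∈ S → t = m := by
  classical
  obtain ⟨m, hmS, hm, hfirst⟩ :=
    w.bypass.exists_mem_support_forall_mem_support_imp_eq
      {t ∈ w.bypass.support.toFinset | t ∈ S} ⟨b, by simp [hb]⟩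
  have hsub := w.bypass.support_takeUntil_subset_support hm
  refine ⟨m, (Finset.mem_filter.1 hmS).2, w.bypass.takeUntil m hm, w.bypass_isPath.takeUntil hm,
    List.Subset.trans hsub w.support_bypass_subset_support, fun t ht htS => ?_⟩
  exact hfirst t (by simpa [htS] using hsub ht) ht

lemma exists_tripod (w : H.Walk a b) (w' : H.Walk c a) :
    ∃ (m : V) (p : H.Walk m a) (q : H.Walk m b) (r : H.Walk m c),
      (p.IsPath ∧ q.IsPath ∧ r.IsPath) ∧
      (p.support ⊆ w.support ∧ q.support ⊆ w.support ∧ r.support ⊆ w'.support) ∧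
      (∀ t ∈ p.support, t ∈ q.support → t = m) ∧
      (∀ t ∈ p.support, t ∈ r.support → t = m) ∧
      (∀ t ∈ q.support, t ∈ r.support → t = m) := by
  classical
  obtain ⟨m, hm, r, hr, hrw', hfirst⟩ :=
    exists_path_to_first_mem (S := {t | t ∈ w.bypass.support}) w' w.bypass.start_mem_support
  obtain ⟨p, q, hp, hq, hpq⟩ := w.bypass_isPath.mem_support_iff_exists_append.1 hm
  have hpw : p.support ⊆ w.bypass.support := by
    rw [hpq]; exact p.support_subset_support_append_left q
  have hqw : q.support ⊆ w.bypass.support := by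
    rw [hpq]; exact p.support_subset_support_append_right q
  have hbypass := w.support_bypass_subset_support
  refine ⟨m, p.reverse, q, r.reverse, ⟨hp.reverse, hq, hr.reverse⟩, ?_⟩
  simp only [Walk.support_reverse, List.mem_reverse, List.reverse_subset]
  exact ⟨⟨List.Subset.trans hpw hbypass, List.Subset.trans hqw hbypass, hrw'⟩,
    fun t htp htq => eq_of_mem_support_of_isPath_append (hpq ▸ w.bypass_isPath) htp htq,
    fun t htp htr => hfirst t htr (hpw htp), fun t htq htr => hfirst t htr (hqw htq)⟩

end Walks

/-- Two vertices `u`, `v` are linked to a set `T` if vertex-disjoint walks lead from `u` and from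
`v` into `T`. The walks may meet `T` before their ends. -/
def DisjointlyLinked (H : SimpleGraph V) (T : Set V) (u v : V) : Prop :=
  ∃ s ∈ T, ∃ t ∈ T, ∃ (p : H.Walk u s) (q : H.Walk v t), p.support.Disjoint q.support

/-- No vertex other than `v` separates `v` from the set `T`. -/
def NotSeparated (H : SimpleGraph V) (T : Set V) (v : V) : Prop :=
  ∀ c ≠ v, ∃ t ∈ T, ReachAvoiding H {c} v t

section Linking

variable {H : SimpleGraph V} {T : Set V} {u u' v : V}

-- Follow `r` up to its first vertex on `p`, on `q` or in `T`, and switch to `p` or `q` there. This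
-- leaves for `u` the walk `q`, or else the edge to its neighbour followed by `p`.
lemma disjointlyLinked_of_disjoint_of_walk {s t t' : V} (hs : s ∈ T) (ht : t ∈ T) (ht' : t' ∈ T)
    (hadj : H.Adj u u') {p : H.Walk u' s} {q : H.Walk u t} (hq : q.IsPath)
    (hpq : p.support.Disjoint q.support) (r : H.Walk v t') (hur : u ∉ r.support) :
    DisjointlyLinked H T u v := by
  classical
  obtain ⟨m, hm, r₀, -, hr₀r, hfirst⟩ :=
    exists_path_to_first_mem (S := {z | z ∈ p.support ∨ z ∈ q.support} ∪ T) r (.inr ht')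
  have hur₀ : u ∉ r₀.support := fun hu => hur (hr₀r hu)
  by_cases hmq : m ∈ q.support
  · obtain ⟨q₁, q₂, -, -, rfl⟩ := hq.mem_support_iff_exists_append.1 hmq
    have hq₂ := q₁.support_subset_support_append_right q₂
    refine ⟨s, hs, t, ht, .cons hadj p, r₀.append q₂, fun z hz hz' => ?_⟩
    rw [Walk.support_cons, List.mem_cons] at hz
    rcases hz with rfl | hzp <;> rcases (Walk.mem_support_append_iff _ _).1 hz' with hzr | hzq
    · exact hur₀ hzr
    · exact hur₀ (eq_of_mem_support_of_isPath_append hq q₁.start_mem_support hzq ▸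
        r₀.end_mem_support)
    · exact hpq (hfirst z hzr (.inl (.inl hzp)) ▸ hzp) hmq
    · exact hpq hzp (hq₂ hzq)
  · have hqr₀ : q.support.Disjoint r₀.support :=
      fun z hzq hzr => hmq (hfirst z hzr (.inl (.inr hzq)) ▸ hzq)
    rcases hm with (hmp | hmq') | hmT
    · refine ⟨t, ht, s, hs, q, r₀.append (p.dropUntil m hmp), fun z hzq hz => ?_⟩
      rcases (Walk.mem_support_append_iff _ _).1 hz with hzr | hzp
      · exact hqr₀ hzq hzr
      · exact hpq (p.support_dropUntil_subset_support hmp hzp) hzq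
    · exact absurd hmq' hmq
    · exact ⟨t, ht, m, hmT, q, r₀, hqr₀⟩

lemma DisjointlyLinked.cons (hlink : DisjointlyLinked H T u' v) (hadj : H.Adj u u') (huv : u ≠ v)
    (hv : NotSeparated H T v) : DisjointlyLinked H T u v := by
  classical
  obtain ⟨s, hs, t, ht, p, q, hpq⟩ := hlink
  have hbypass := q.support_bypass_subset_support
  by_cases huq : u ∈ q.bypass.support
  · obtain ⟨t', ht', r, hur⟩ := hv u huv
    have hsub := List.Subset.trans (q.bypass.support_dropUntil_subset_support huq) hbypass
    exact disjointlyLinked_of_disjoint_of_walk hs ht ht' hadj (q.bypass_isPath.dropUntil huq)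
      (fun _ hzp hzq => hpq hzp (hsub hzq)) r fun hu => hur u hu rfl
  · exact ⟨s, hs, t, ht, .cons hadj p, q.bypass,
      List.disjoint_cons_left.2 ⟨huq, fun _ hzp hzq => hpq hzp (hbypass hzq)⟩⟩

lemma disjointlyLinked_of_walk {t : V} (r : H.Walk u t) (ht : t ∈ T) (hvr : v ∉ r.support)
    (hv : NotSeparated H T v) : DisjointlyLinked H T u v := by
  induction r with
  | @nil w =>
    have hwv : w ≠ v := by rintro rfl; simp at hvr
    obtain ⟨t, htT, q, hq⟩ := hv w hwv
    exact ⟨w, ht, t, htT, .nil, q, by simpa using fun h => hq w h rfl⟩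
  | cons hadj r ih =>
    rw [Walk.support_cons, List.mem_cons, not_or] at hvr
    exact (ih ht hvr.2).cons hadj (Ne.symm hvr.1) hv

lemma NotSeparated.disjointlyLinked (hu : NotSeparated H T u) (hv : NotSeparated H T v)
    (huv : u ≠ v) : DisjointlyLinked H T u v := by
  obtain ⟨t, ht, r, hr⟩ := hu v huv.symm
  exact disjointlyLinked_of_walk r ht (fun hvr => hr v hvr rfl) hv

end Linking

section Labels

variable {H : SimpleGraph V} {lam : Sym2 V → ZMod 2} {a b c u v x y z : V}

lemma walkLambda_cons (h : H.Adj a b) (w : H.Walk b c) :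
    walkLambda lam (.cons h w) = lam s(a, b) + walkLambda lam w := by
  simp [walkLambda]

lemma walkLambda_append (p : H.Walk a b) (q : H.Walk b c) :
    walkLambda lam (p.append q) = walkLambda lam p + walkLambda lam q := by
  simp [walkLambda]

lemma walkLambda_reverse (w : H.Walk a b) : walkLambda lam w.reverse = walkLambda lam w := by
  simp [walkLambda]

lemma walkLambda_rotate [DecidableEq V] (w : H.Walk a a) (hb : b ∈ w.support) :
    walkLambda lam (w.rotate b hb) = walkLambda lam w :=
  ((w.rotate_edges b hb).perm.map lam).sum_eq

lemma walkLambda_mapLe {G : SimpleGraph V} (hHG : H ≤ G) (w : H.Walk a b) :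
    walkLambda lam (w.mapLe hHG) = walkLambda lam w := by
  rw [walkLambda, walkLambda, Walk.edges_mapLe_eq_edges]

lemma walkLambda_cons_eq_zero_of_isPath
    (hcycle : ∀ (z : V) (C : H.Walk z z), C.IsCycle → walkLambda lam C = 0)
    (h : H.Adj a b) {p : H.Walk b a} (hp : p.IsPath) : walkLambda lam (.cons h p) = 0 := by
  by_cases hedge : s(b, a) ∈ p.edges
  · rw [hp.eq_adj_toWalk_of_mem_edges hedge]
    simp [walkLambda, Sym2.eq_swap, CharTwo.add_self_eq_zero]
  · exact hcycle a _ ((Walk.cons_isCycle_iff p h).2 ⟨hp, Sym2.eq_swap ▸ hedge⟩)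

lemma walkLambda_bypass [DecidableEq V]
    (hcycle : ∀ (z : V) (C : H.Walk z z), C.IsCycle → walkLambda lam C = 0) (w : H.Walk a b) :
    walkLambda lam w.bypass = walkLambda lam w := by
  induction w with
  | nil => rfl
  | @cons a b c h p ih =>
    rw [walkLambda_cons, ← ih, Walk.bypass]
    split_ifs with ha
    · have hclosed := walkLambda_cons_eq_zero_of_isPath hcycle h (p.bypass_isPath.takeUntil ha)
      rw [walkLambda_cons] at hclosed
      conv_rhs => rw [← p.bypass.take_spec ha, walkLambda_append, ← add_assoc, hclosed, zero_add]
    · rw [walkLambda_cons]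

lemma walkLambda_closed_eq_zero_of_cycles
    (hcycle : ∀ (z : V) (C : H.Walk z z), C.IsCycle → walkLambda lam C = 0) (w : H.Walk a a) :
    walkLambda lam w = 0 := by
  classical
  rw [← walkLambda_bypass hcycle w, (Walk.isPath_iff_nil.1 w.bypass_isPath).eq_nil]
  rfl

lemma exists_arcs {C : H.Walk z z} (hC : C.IsCycle) (ha : a ∈ C.support) (hb : b ∈ C.support)
    (hab : a ≠ b) :
    ∃ p q : H.Walk a b, (p.IsPath ∧ q.IsPath) ∧ (p.support ⊆ C.support ∧ q.support ⊆ C.support) ∧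
      walkLambda lam p + walkLambda lam q = walkLambda lam C := by
  classical
  have hb' : b ∈ (C.rotate a ha).support := (C.mem_support_rotate_iff a ha).2 hb
  obtain ⟨p, q, hpq⟩ := Walk.mem_support_iff_exists_append.1 hb'
  have hcyc : (p.append q).IsCycle := hpq ▸ hC.rotate ha
  have hsub : ∀ t ∈ (p.append q).support, t ∈ C.support :=
    fun t ht => (C.mem_support_rotate_iff a ha).1 (hpq ▸ ht)
  refine ⟨p, q.reverse, ⟨hcyc.isPath_of_append_left (Walk.not_nil_of_ne hab.symm),
    (hcyc.isPath_of_append_right (Walk.not_nil_of_ne hab)).reverse⟩,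
    ⟨fun t ht => ?_, fun t ht => ?_⟩, ?_⟩
  · exact hsub t (p.support_subset_support_append_left q ht)
  · exact hsub t (p.support_subset_support_append_right q (by simpa using ht))
  · rw [walkLambda_reverse, ← walkLambda_append, ← hpq, walkLambda_rotate]

-- The ends of the disjoint walks are cut off where they last leave `C`; the two arcs of `C` then
-- complete them to two paths from `x` to `y`.
lemma walkLambda_eq_zero_of_isCycle_of_disjoint
    (hpaths : ∀ p q : H.Walk x y, p.IsPath → q.IsPath → walkLambda lam p = walkLambda lam q)
    {C : H.Walk z z} (hC : C.IsCycle) (hu : u ∈ C.support) (hv : v ∈ C.support)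
    (p : H.Walk u x) (q : H.Walk v y) (hpq : p.support.Disjoint q.support) :
    walkLambda lam C = 0 := by
  obtain ⟨a, ha, p', hp', hp'p, hp'C⟩ :=
    exists_path_to_first_mem (S := {t | t ∈ C.support}) p.reverse hu
  obtain ⟨b, hb, q', hq', hq'q, hq'C⟩ :=
    exists_path_to_first_mem (S := {t | t ∈ C.support}) q.reverse hv
  have hdisj : p'.support.Disjoint q'.support := fun t htp htq =>
    hpq (by simpa using hp'p htp) (by simpa using hq'q htq)
  have hab : a ≠ b := fun h => hdisj p'.end_mem_support (h ▸ q'.end_mem_support)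
  obtain ⟨A₁, A₂, ⟨hA₁, hA₂⟩, ⟨hA₁C, hA₂C⟩, hsum⟩ := exists_arcs (lam := lam) hC ha hb hab
  have isPath_through {A : H.Walk a b} (hA : A.IsPath) (hAC : A.support ⊆ C.support) :
      (p'.append (A.append q'.reverse)).IsPath := by
    refine isPath_append hp' (isPath_append hA hq'.reverse fun t htA htq => ?_) fun t htp ht => ?_
    · exact hq'C t (by simpa using htq) (hAC htA)
    · rcases (Walk.mem_support_append_iff _ _).1 ht with htA | htq
      · exact hp'C t htp (hAC htA)
      · exact (hdisj htp (by simpa using htq)).elim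
  have heq := hpaths _ _ (isPath_through hA₁ hA₁C) (isPath_through hA₂ hA₂C)
  simp only [walkLambda_append, add_right_inj, add_left_inj] at heq
  rw [← hsum, heq, CharTwo.add_self_eq_zero]

theorem walkLambda_closed_eq_zero_of_notSeparated
    (hpaths : ∀ p q : H.Walk x y, p.IsPath → q.IsPath → walkLambda lam p = walkLambda lam q)
    (hsep : ∀ v ∈ H.support, NotSeparated H {x, y} v) (w : H.Walk a a) :
    walkLambda lam w = 0 := by
  refine walkLambda_closed_eq_zero_of_cycles (fun z C hC => ?_) w
  have hadj := C.adj_snd hC.not_nil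
  have hz : z ∈ C.support := C.start_mem_support
  have hsnd : C.snd ∈ C.support := C.getVert_mem_support 1
  obtain ⟨s, hs, t, ht, p, q, hpq⟩ :=
    (hsep z ⟨_, hadj⟩).disjointlyLinked (hsep C.snd ⟨_, hadj.symm⟩) hadj.ne
  have hst : s ≠ t := fun h => hpq p.end_mem_support (h ▸ q.end_mem_support)
  rcases hs with rfl | rfl <;> rcases ht with rfl | rfl
  · exact absurd rfl hst
  · exact walkLambda_eq_zero_of_isCycle_of_disjoint hpaths hC hz hsnd p q hpq
  · exact walkLambda_eq_zero_of_isCycle_of_disjoint hpaths hC hsnd hz q p hpq.symm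
  · exact absurd rfl hst

end Labels

/-- `x` is adjacent to the component of `a` in `H - Zv`; for `x ∈ Zv` this says that `x` is a
vertex of attachment of the bridge containing `a`. -/
def IsAttached (H : SimpleGraph V) (Zv : Set V) (a x : V) : Prop :=
  ∃ c, ReachAvoiding H Zv a c ∧ H.Adj c x

section Attachments

variable {H : SimpleGraph V} {lam : Sym2 V → ZMod 2} {Zv S : Set V} {a b c m x y x' y' : V}

lemma ReachAvoiding.symm (h : ReachAvoiding H Zv a b) : ReachAvoiding H Zv b a := by
  obtain ⟨w, hw⟩ := h
  exact ⟨w.reverse, by simpa using hw⟩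

lemma ReachAvoiding.trans (hab : ReachAvoiding H Zv a b) (hbc : ReachAvoiding H Zv b c) :
    ReachAvoiding H Zv a c := by
  obtain ⟨w, hw⟩ := hab
  obtain ⟨w', hw'⟩ := hbc
  refine ⟨w.append w', fun t ht => ?_⟩
  rcases (Walk.mem_support_append_iff _ _).1 ht with ht | ht
  exacts [hw t ht, hw' t ht]

lemma ReachAvoiding.notMem (h : ReachAvoiding H Zv a b) : b ∉ Zv := by
  obtain ⟨w, hw⟩ := h
  exact hw b w.end_mem_support

lemma ReachAvoiding.concat (hab : ReachAvoiding H Zv a b) (hadj : H.Adj b c) (hc : c ∉ Zv) :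
    ReachAvoiding H Zv a c :=
  hab.trans ⟨hadj.toWalk, by simp [hab.notMem, hc]⟩

lemma eq_or_eq_of_mem_support_concat_reverse_append_concat
    {p : H.Walk m x'} {q : H.Walk m y'} (hpZ : ∀ t ∈ p.support, t ∉ Zv)
    (hqZ : ∀ t ∈ q.support, t ∉ Zv) (hx : H.Adj x' x) (hy : H.Adj y' y) :
    ∀ t ∈ ((p.concat hx).reverse.append (q.concat hy)).support, t ∈ Zv → t = x ∨ t = y := by
  intro t ht htZ
  simp only [Walk.mem_support_append_iff, Walk.support_reverse, List.mem_reverse,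
    Walk.support_concat, List.mem_append, List.mem_singleton] at ht
  exact ht.imp (fun h => h.resolve_left (hpZ t · htZ)) fun h => h.resolve_left (hqZ t · htZ)

lemma isPath_concat_reverse_append_concat {p : H.Walk m x'} {q : H.Walk m y'}
    (hp : p.IsPath) (hq : q.IsPath) (hpq : ∀ t ∈ p.support, t ∈ q.support → t = m)
    (hpZ : ∀ t ∈ p.support, t ∉ Zv) (hqZ : ∀ t ∈ q.support, t ∉ Zv)
    (hx : H.Adj x' x) (hy : H.Adj y' y) (hxZ : x ∈ Zv) (hyZ : y ∈ Zv) (hxy : x ≠ y) :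
    ((p.concat hx).reverse.append (q.concat hy)).IsPath := by
  refine isPath_append (hp.concat (fun h => hpZ x h hxZ) hx).reverse
    (hq.concat (fun h => hqZ y h hyZ) hy) fun t htp htq => ?_
  simp only [Walk.support_reverse, List.mem_reverse, Walk.support_concat,
    List.mem_append, List.mem_singleton] at htp htq
  rcases htp with htp | rfl <;> rcases htq with htq | rfl
  · exact hpq t htp htq
  · exact absurd hyZ (hpZ t htp)
  · exact absurd hxZ (hqZ t htq)
  · exact absurd rfl hxy

lemma exists_isPath_of_isAttached (hx : IsAttached H Zv a x) (hy : IsAttached H Zv a y)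
    (hxZ : x ∈ Zv) (hyZ : y ∈ Zv) (hxy : x ≠ y) :
    ∃ w : H.Walk x y, w.IsPath ∧ ∀ t ∈ w.support, t ∈ Zv → t = x ∨ t = y := by
  classical
  obtain ⟨x', hax', hx⟩ := hx
  obtain ⟨y', hay', hy⟩ := hy
  obtain ⟨w, hw⟩ := hax'.symm.trans hay'
  have hnil : ∀ t ∈ (Walk.nil : H.Walk x' x').support, t ∉ Zv := by simpa using hax'.notMem
  have hbypass : ∀ t ∈ w.bypass.support, t ∉ Zv :=
    fun t ht => hw t (w.support_bypass_subset_support ht)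
  exact ⟨_, isPath_concat_reverse_append_concat .nil w.bypass_isPath (by simp) hnil hbypass
    hx hy hxZ hyZ hxy, eq_or_eq_of_mem_support_concat_reverse_append_concat hnil hbypass hx hy⟩

-- Three attached vertices are the ends of a tripod, and the labels of its three paths would sum
-- to `1 + 1 + 1` although each leg is used twice.
lemma eq_pair_of_isAttached (hSZ : S ⊆ Zv) (hS : ∀ x ∈ S, IsAttached H Zv a x)
    (hpaths : ∀ x ∈ S, ∀ y ∈ S, x ≠ y → ∀ w : H.Walk x y, w.IsPath →
      (∀ t ∈ w.support, t ∈ Zv → t = x ∨ t = y) → walkLambda lam w = 1)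
    (hx : x ∈ S) (hy : y ∈ S) (hxy : x ≠ y) : S = {x, y} := by
  refine Set.Subset.antisymm (fun z hz => ?_) (Set.pair_subset hx hy)
  by_contra hzxy
  rw [Set.mem_insert_iff, Set.mem_singleton_iff, not_or] at hzxy
  obtain ⟨x', hax', hx'⟩ := hS x hx
  obtain ⟨y', hay', hy'⟩ := hS y hy
  obtain ⟨z', haz', hz'⟩ := hS z hz
  obtain ⟨w, hw⟩ := hax'.symm.trans hay'
  obtain ⟨w', hw'⟩ := haz'.symm.trans hax'
  obtain ⟨m, p, q, r, ⟨hp, hq, hr⟩, ⟨hpw, hqw, hrw'⟩, hpq, hpr, hqr⟩ := exists_tripod w w'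
  have hpZ : ∀ t ∈ p.support, t ∉ Zv := fun t ht => hw t (hpw ht)
  have hqZ : ∀ t ∈ q.support, t ∉ Zv := fun t ht => hw t (hqw ht)
  have hrZ : ∀ t ∈ r.support, t ∉ Zv := fun t ht => hw' t (hrw' ht)
  have hlam_xy := hpaths x hx y hy hxy _
    (isPath_concat_reverse_append_concat hp hq hpq hpZ hqZ hx' hy' (hSZ hx) (hSZ hy) hxy)
    (eq_or_eq_of_mem_support_concat_reverse_append_concat hpZ hqZ hx' hy')
  have hlam_xz := hpaths x hx z hz (Ne.symm hzxy.1) _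
    (isPath_concat_reverse_append_concat hp hr hpr hpZ hrZ hx' hz' (hSZ hx) (hSZ hz)
      (Ne.symm hzxy.1))
    (eq_or_eq_of_mem_support_concat_reverse_append_concat hpZ hrZ hx' hz')
  have hlam_yz := hpaths y hy z hz (Ne.symm hzxy.2) _
    (isPath_concat_reverse_append_concat hq hr hqr hqZ hrZ hy' hz' (hSZ hy) (hSZ hz)
      (Ne.symm hzxy.2))
    (eq_or_eq_of_mem_support_concat_reverse_append_concat hqZ hrZ hy' hz')
  rw [walkLambda_append, walkLambda_reverse] at hlam_xy hlam_xz hlam_yz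
  have no_solution : ∀ i j k : ZMod 2, i + j = 1 → i + k = 1 → j + k ≠ 1 := by decide
  exact no_solution _ _ _ hlam_xy hlam_xz hlam_yz

end Attachments

/-- Every proper path in `B` joining two distinct vertices of `V(B) ∩ Zv` is nontrivial. -/
def ProperPathsNontrivial {G : SimpleGraph V} (B : G.Subgraph) (Zv : Set V) (Ze : Set (Sym2 V))
    (lam : Sym2 V → ZMod 2) : Prop :=
  ∀ x y, x ∈ B.verts → x ∈ Zv → y ∈ B.verts → y ∈ Zv → x ≠ y →
    ∀ w : G.Walk x y, w.IsPath → IsProperWalkIn B Zv Ze w → walkLambda lam w ≠ 0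

/-- `B` has exactly two vertices on `Zv`, and it induces the arrow between them and no loop at
either of them. -/
def InducesSingleArrow {G : SimpleGraph V} (B : G.Subgraph) (Zv : Set V) (Ze : Set (Sym2 V))
    (lam : Sym2 V → ZMod 2) : Prop :=
  ∃ x y : V, x ≠ y ∧ B.verts ∩ Zv = {x, y} ∧
    (∃ w : G.Walk x y, IsProperWalkIn B Zv Ze w ∧ walkLambda lam w ≠ 0) ∧
    (∀ w : G.Walk x x, IsProperWalkIn B Zv Ze w → walkLambda lam w = 0) ∧
    (∀ w : G.Walk y y, IsProperWalkIn B Zv Ze w → walkLambda lam w = 0)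

/-- The bridge formed by a single edge `s(u, v)`: the first alternative in `IsBridgeOf`. -/
structure IsEdgeBridge (G : SimpleGraph V) (Zv : Set V) (Ze : Set (Sym2 V)) (u v : V)
    (B : G.Subgraph) : Prop where
  adj : G.Adj u v
  notMem_edges : s(u, v) ∉ Ze
  left_mem : u ∈ Zv
  right_mem : v ∈ Zv
  verts_eq : B.verts = {u, v}
  adj_iff : ∀ a b, B.Adj a b ↔ s(a, b) = s(u, v)

/-- The bridge formed by the component of `a` in `G - Zv` and the edges leaving it: the second
alternative in `IsBridgeOf`. -/
structure IsComponentBridge (G : SimpleGraph V) (Zv : Set V) (a : V) (B : G.Subgraph) :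
    Prop where
  notMem : a ∉ Zv
  verts_eq : B.verts = {b | ReachAvoiding G Zv a b} ∪
    {z | z ∈ Zv ∧ ∃ c, ReachAvoiding G Zv a c ∧ G.Adj c z}
  adj_iff : ∀ x y, B.Adj x y ↔ G.Adj x y ∧ (ReachAvoiding G Zv a x ∨ ReachAvoiding G Zv a y)

section Bridges

variable {G : SimpleGraph V} {lam : Sym2 V → ZMod 2} {Zv : Set V} {Ze : Set (Sym2 V)}
  {B : G.Subgraph} {a c u v x y z : V}

lemma IsEdgeBridge.walkLambda_closed_eq_zero (hB : IsEdgeBridge G Zv Ze u v B) {w : G.Walk x x}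
    (hw : IsProperWalkIn B Zv Ze w) : walkLambda lam w = 0 := by
  cases w with
  | nil => rfl
  | @cons _ c _ hadj p =>
    have hcB : c ∈ B.verts := hw.1 c (by simp)
    have hcZ : c ∈ Zv := by
      rw [hB.verts_eq] at hcB
      rcases hcB with rfl | rfl
      exacts [hB.left_mem, hB.right_mem]
    have hcx : c = x := by simpa using hw.2.2.1 c (by simp) hcZ
    exact absurd hcx.symm hadj.ne

lemma IsEdgeBridge.inducesSingleArrow (hB : IsEdgeBridge G Zv Ze u v B)
    (hnt : ProperPathsNontrivial B Zv Ze lam) : InducesSingleArrow B Zv Ze lam := by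
  have hproper : IsProperWalkIn B Zv Ze hB.adj.toWalk :=
    ⟨by simp [hB.verts_eq], by simp [hB.adj_iff], by simp, by simpa using hB.notMem_edges⟩
  have hverts : B.verts ∩ Zv = {u, v} := by
    rw [hB.verts_eq, Set.inter_eq_left]
    exact Set.pair_subset hB.left_mem hB.right_mem
  have hu : u ∈ B.verts := by simp [hB.verts_eq]
  have hv : v ∈ B.verts := by simp [hB.verts_eq]
  exact ⟨u, v, hB.adj.ne, hverts,
    ⟨_, hproper, hnt u v hu hB.left_mem hv hB.right_mem hB.adj.ne _ (.of_adj hB.adj) hproper⟩,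
    fun _ => hB.walkLambda_closed_eq_zero, fun _ => hB.walkLambda_closed_eq_zero⟩

lemma mem_verts_of_mem_support (hx : x ∈ B.verts) (w : B.spanningCoe.Walk x y) :
    ∀ t ∈ w.support, t ∈ B.verts := by
  intro t ht
  rw [← List.mem_reverse, ← Walk.support_reverse] at ht
  rcases Walk.mem_support_iff_exists_mem_edges.1 ht with rfl | ⟨e, he, hte⟩
  · exact hx
  · exact Subgraph.mem_verts_of_mem_edge (w.reverse.edges_subset_edgeSet he) hte

lemma exists_walk_notMem_support (hconn : (G.induce {u | u ≠ v}).Connected) (hx : x ≠ v)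
    (hy : y ≠ v) : ∃ w : G.Walk x y, v ∉ w.support := by
  obtain ⟨w⟩ := hconn.preconnected ⟨x, hx⟩ ⟨y, hy⟩
  have hv : v ∉ (w.map (Embedding.induce {u | u ≠ v}).toHom).support := by
    rw [Walk.support_map, List.mem_map]
    rintro ⟨⟨t, ht⟩, -, htv⟩
    exact ht htv
  exact ⟨_, hv⟩

namespace IsComponentBridge

lemma spanningCoe_adj (hB : IsComponentBridge G Zv a B) (hc : ReachAvoiding G Zv a c)
    (hadj : G.Adj c x) : B.spanningCoe.Adj c x :=
  (hB.adj_iff c x).2 ⟨hadj, .inl hc⟩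

lemma mem_verts_of_adj (hB : IsComponentBridge G Zv a B) (hc : ReachAvoiding G Zv a c)
    (hadj : G.Adj c z) (hz : z ∈ Zv) : z ∈ B.verts := by
  rw [hB.verts_eq]
  exact .inr ⟨hz, c, hc, hadj⟩

lemma reachAvoiding_or_mem (hB : IsComponentBridge G Zv a B) (hx : x ∈ B.verts) :
    ReachAvoiding G Zv a x ∨ x ∈ Zv := by
  rw [hB.verts_eq] at hx
  exact hx.imp id And.left

lemma reachAvoiding_self (hB : IsComponentBridge G Zv a B) : ReachAvoiding G Zv a a :=
  ⟨.nil, by simpa using hB.notMem⟩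

lemma reachAvoiding_spanningCoe (hB : IsComponentBridge G Zv a B)
    (hc : ReachAvoiding G Zv a c) : ReachAvoiding B.spanningCoe Zv a c := by
  classical
  obtain ⟨w, hw⟩ := hc
  have hreach : ∀ t ∈ w.support, ReachAvoiding G Zv a t := fun t ht =>
    ⟨w.takeUntil t ht, fun s hs => hw s (w.support_takeUntil_subset_support ht hs)⟩
  have hedges : ∀ e ∈ w.edges, e ∈ B.spanningCoe.edgeSet := by
    rintro ⟨s, t⟩ he
    exact hB.spanningCoe_adj (hreach s (w.fst_mem_support_of_mem_edges he)) (w.adj_of_mem_edges he)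
  exact ⟨w.transfer _ hedges, by simpa using hw⟩

lemma isAttached (hB : IsComponentBridge G Zv a B) (hx : x ∈ B.verts ∩ Zv) :
    IsAttached B.spanningCoe Zv a x := by
  obtain ⟨hxB, hxZ⟩ := hx
  rw [hB.verts_eq] at hxB
  rcases hxB with hax | ⟨-, c, hac, hadj⟩
  · exact absurd hxZ hax.notMem
  · exact ⟨c, hB.reachAvoiding_spanningCoe hac, hB.spanningCoe_adj hac hadj⟩

lemma exists_walk_to_attachment (hB : IsComponentBridge G Zv a B) (w : G.Walk c z)
    (hc : ReachAvoiding G Zv a c) (hz : z ∈ Zv) :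
    ∃ m ∈ B.verts ∩ Zv, ∃ r : B.spanningCoe.Walk c m, r.support ⊆ w.support := by
  induction w with
  | nil => exact absurd hz hc.notMem
  | @cons c d z hadj p ih =>
    have hadj' := hB.spanningCoe_adj hc hadj
    by_cases hd : d ∈ Zv
    · refine ⟨d, ⟨hB.mem_verts_of_adj hc hadj hd, hd⟩, hadj'.toWalk, ?_⟩
      simp
    · obtain ⟨m, hm, r, hr⟩ := ih (hc.concat hadj hd) hz
      exact ⟨m, hm, .cons hadj' r, by simpa using List.cons_subset_cons c hr⟩

lemma notSeparated (hB : IsComponentBridge G Zv a B)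
    (hconn : ∀ v : V, (G.induce {u | u ≠ v}).Connected) (hZv : Zv.Nontrivial)
    (hx : x ∈ B.verts) : NotSeparated B.spanningCoe (B.verts ∩ Zv) x := by
  intro v hvx
  rcases hB.reachAvoiding_or_mem hx with hax | hxZ
  · obtain ⟨z, hz, hzv⟩ := hZv.exists_ne v
    obtain ⟨w, hw⟩ := exists_walk_notMem_support (hconn v) hvx.symm hzv
    obtain ⟨m, hm, r, hr⟩ := hB.exists_walk_to_attachment w hax hz
    exact ⟨m, hm, r, by rintro t ht rfl; exact hw (hr ht)⟩
  · exact ⟨x, ⟨hx, hxZ⟩, .nil, by simpa using hvx.symm⟩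

lemma nontrivial_verts_inter (hB : IsComponentBridge G Zv a B)
    (hconn : ∀ v : V, (G.induce {u | u ≠ v}).Connected) (hZv : Zv.Nontrivial) :
    (B.verts ∩ Zv).Nontrivial := by
  have ha : a ∈ B.verts := by rw [hB.verts_eq]; exact .inl hB.reachAvoiding_self
  have exists_ne_of_ne (v : V) (hva : v ≠ a) : ∃ m ∈ B.verts ∩ Zv, m ≠ v := by
    obtain ⟨m, hm, r, hr⟩ := hB.notSeparated hconn hZv ha v hva
    exact ⟨m, hm, hr m r.end_mem_support⟩
  obtain ⟨z, hz⟩ := hZv.nonempty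
  obtain ⟨x, hx, -⟩ := exists_ne_of_ne z (ne_of_mem_of_not_mem hz hB.notMem)
  obtain ⟨y, hy, hyx⟩ := exists_ne_of_ne x (ne_of_mem_of_not_mem hx.2 hB.notMem)
  exact ⟨y, hy, x, hx, hyx⟩

lemma isProperWalkIn_mapLe (hB : IsComponentBridge G Zv a B) (hZe : ∀ e ∈ Ze, ∀ t ∈ e, t ∈ Zv)
    (hx : x ∈ B.verts) {w : B.spanningCoe.Walk x y}
    (hw : ∀ t ∈ w.support, t ∈ Zv → t = x ∨ t = y) :
    IsProperWalkIn B Zv Ze (w.mapLe B.spanningCoe_le) := by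
  rw [IsProperWalkIn, Walk.support_mapLe_eq_support, Walk.edges_mapLe_eq_edges]
  have hwB : ∀ e ∈ w.edges, e ∈ B.edgeSet :=
    fun e he => by simpa using w.edges_subset_edgeSet he
  refine ⟨mem_verts_of_mem_support hx w, hwB, hw, ?_⟩
  rintro ⟨s, t⟩ he heZ
  rcases ((hB.adj_iff s t).1 (hwB _ he)).2 with hs | ht
  · exact hs.notMem (hZe _ heZ s (Sym2.mem_mk_left s t))
  · exact ht.notMem (hZe _ heZ t (Sym2.mem_mk_right s t))

lemma walkLambda_eq_one (hB : IsComponentBridge G Zv a B) (hZe : ∀ e ∈ Ze, ∀ t ∈ e, t ∈ Zv)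
    (hnt : ProperPathsNontrivial B Zv Ze lam) (hx : x ∈ B.verts ∩ Zv) (hy : y ∈ B.verts ∩ Zv)
    (hxy : x ≠ y) {w : B.spanningCoe.Walk x y} (hw : w.IsPath)
    (hwZ : ∀ t ∈ w.support, t ∈ Zv → t = x ∨ t = y) : walkLambda lam w = 1 := by
  have hne := hnt x y hx.1 hx.2 hy.1 hy.2 hxy _ ((Walk.isPath_mapLe B.spanningCoe_le).2 hw)
    (hB.isProperWalkIn_mapLe hZe hx.1 hwZ)
  rw [walkLambda_mapLe] at hne
  exact Fin.eq_one_of_ne_zero _ hne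

lemma inducesSingleArrow (hB : IsComponentBridge G Zv a B)
    (hconn : ∀ v : V, (G.induce {u | u ≠ v}).Connected) (hZv : Zv.Nontrivial)
    (hZe : ∀ e ∈ Ze, ∀ t ∈ e, t ∈ Zv) (hnt : ProperPathsNontrivial B Zv Ze lam) :
    InducesSingleArrow B Zv Ze lam := by
  obtain ⟨x, hx, y, hy, hxy⟩ := hB.nontrivial_verts_inter hconn hZv
  have hpair : B.verts ∩ Zv = {x, y} :=
    eq_pair_of_isAttached (lam := lam) Set.inter_subset_right (fun _ => hB.isAttached)
      (fun _ hs _ ht hst _ => hB.walkLambda_eq_one hZe hnt hs ht hst) hx hy hxy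
  have hlam_one (w : B.spanningCoe.Walk x y) (hw : w.IsPath) : walkLambda lam w = 1 :=
    hB.walkLambda_eq_one hZe hnt hx hy hxy hw fun t ht htZ =>
      hpair.subset ⟨mem_verts_of_mem_support hx.1 w t ht, htZ⟩
  have hsep (v : V) (hv : v ∈ B.spanningCoe.support) : NotSeparated B.spanningCoe {x, y} v := by
    obtain ⟨t, hvt⟩ := hv
    exact hpair ▸ hB.notSeparated hconn hZv (B.edge_vert hvt)
  have hclosed (z : V) (w : G.Walk z z) (hw : IsProperWalkIn B Zv Ze w) :
      walkLambda lam w = 0 := by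
    have hedges : ∀ e ∈ w.edges, e ∈ B.spanningCoe.edgeSet := by simpa using hw.2.1
    have h := walkLambda_closed_eq_zero_of_notSeparated
      (fun p q hp hq => (hlam_one p hp).trans (hlam_one q hq).symm) hsep (w.transfer _ hedges)
    rwa [walkLambda, Walk.edges_transfer] at h
  obtain ⟨w, hw, hwZ⟩ := exists_isPath_of_isAttached (hB.isAttached hx) (hB.isAttached hy)
    hx.2 hy.2 hxy
  refine ⟨x, y, hxy, hpair, ⟨_, hB.isProperWalkIn_mapLe hZe hx.1 hwZ, ?_⟩, hclosed x, hclosed y⟩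
  rw [walkLambda_mapLe, hlam_one w hw]
  exact one_ne_zero

end IsComponentBridge

end Bridges

theorem statement7_general (G : SimpleGraph V) (lam : Sym2 V → ZMod 2)
    (hconn : ∀ v : V, (G.induce {u | u ≠ v}).Connected) {Zv : Set V} {Ze : Set (Sym2 V)}
    (hZv : Zv.Nontrivial) (hZe : ∀ e ∈ Ze, ∀ t ∈ e, t ∈ Zv) (B : G.Subgraph)
    (hB : IsBridgeOf G Zv Ze B) (hnt : ProperPathsNontrivial B Zv Ze lam) :
    InducesSingleArrow B Zv Ze lam := by
  rcases hB with ⟨u, v, hadj, hedge, hu, hv, hverts, hB⟩ | ⟨a, ha, hverts, hB⟩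
  · exact IsEdgeBridge.inducesSingleArrow ⟨hadj, hedge, hu, hv, hverts, hB⟩ hnt
  · exact IsComponentBridge.inducesSingleArrow ⟨ha, hverts, hB⟩ hconn hZv hZe hnt

/-- In a 2-connected graph, if every proper path in a bridge `B` with both
(distinct) endpoints in `V(B) ∩ V(Z)` is nontrivial, then `V(B) ∩ V(Z)` consists of
exactly two vertices `x ≠ y`, `B` induces the arrow between them (there is a nontrivial
proper walk in `B` from `x` to `y`), and `B` induces no loop (every proper closed walk
in `B` based at `x` or at `y` is trivial). -/
theorem statement7 [Fintype V] (G : SimpleGraph V) (lam : Sym2 V → ZMod 2)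
    (h2 : TwoConnected G)
    (z₀ : V) (Z : G.Walk z₀ z₀) (hZ : Z.IsCycle) (B : G.Subgraph)
    (hB : IsBridgeOf G {u | u ∈ Z.support} {e | e ∈ Z.edges} B)
    (hnt : ∀ x y, x ∈ B.verts → x ∈ Z.support → y ∈ B.verts → y ∈ Z.support → x ≠ y →
      ∀ w : G.Walk x y, w.IsPath →
        IsProperWalkIn B {u | u ∈ Z.support} {e | e ∈ Z.edges} w →
        walkLambda lam w ≠ 0) :
    ∃ x y : V, x ≠ y ∧ B.verts ∩ {u | u ∈ Z.support} = {x, y} ∧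
      (∃ w : G.Walk x y, IsProperWalkIn B {u | u ∈ Z.support} {e | e ∈ Z.edges} w ∧
        walkLambda lam w ≠ 0) ∧
      (∀ w : G.Walk x x, IsProperWalkIn B {u | u ∈ Z.support} {e | e ∈ Z.edges} w →
        walkLambda lam w = 0) ∧
      (∀ w : G.Walk y y, IsProperWalkIn B {u | u ∈ Z.support} {e | e ∈ Z.edges} w →
        walkLambda lam w = 0) := by
  refine statement7_general G lam h2.2.2 ?_ ?_ B hB hnt
  · exact ⟨z₀, Z.start_mem_support, Z.snd, Z.getVert_mem_support 1, (Z.adj_snd hZ.not_nil).ne⟩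
  · exact fun e he t ht => Walk.mem_support_of_mem_edges he ht
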